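/- arXiv:2601.19848 — 3 statements merged into one kernel-verified Lean document; each statement's English description precedes it below -/
import Mathlib

section
/- Let G ⊆ P_n be a stabilizer group of dimension n − k with a weight-optimal generating set g_1, …, g_{n−k} (ordered with wt(g_1) ≤ … ≤ wt(g_{n−k})). Let w := wt(g_{n−k}) = W(G) and let y := #{i : wt(g_i) = w}, so 1 ≤ y ≤ n − k. Then: (a) A_w(G) ≥ y; (b) Σ_{i=0}^{w−1} A_i(G) ≤ 2^{n−k−y}; and (c) for every M with w − 1 ≤ M ≤ n, Σ_{m=0}^{M} A_m(G) ≥ Σ_{p=0}^{n−k−y} Σ_{q=0}^{y} [p(w−1) + qw ≤ M] · C(n−k−y, p) · C(y, q), where C(·,·) denotes binomial coefficients and [·] is the indicator. -/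
open scoped Classical

noncomputable section

/-- Pauli strings modulo phase, indexed by a finite type. -/
abbrev PauliT (ι : Type) : Type := ι → ZMod 2 × ZMod 2

abbrev Pauli (n : ℕ) : Type := PauliT (Fin n)

variable {ι : Type} [Fintype ι]

/-- Weight of a Pauli string. -/
def wt (v : PauliT ι) : ℕ := (Finset.univ.filter fun i => v i ≠ 0).card

/-- Support of a Pauli string. -/
def suppF (v : PauliT ι) : Finset ι := Finset.univ.filter fun i => v i ≠ 0

/-- Symplectic form encoding commutation. -/
def sympl (u v : PauliT ι) : ZMod 2 :=
  ∑ i, ((u i).1 * (v i).2 + (u i).2 * (v i).1)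

/-- `G` is a stabilizer group (isotropic subspace). -/
def IsStabilizer (G : Submodule (ZMod 2) (PauliT ι)) : Prop :=
  ∀ u ∈ G, ∀ v ∈ G, sympl u v = 0

/-- Membership in the symplectic dual `G^⊥`. -/
def inDual (G : Submodule (ZMod 2) (PauliT ι)) (v : PauliT ι) : Prop :=
  ∀ g ∈ G, sympl v g = 0

/-- Distance: minimum weight of an element of `G^⊥ \ G`, `⊤` if none exists. -/
def distG (G : Submodule (ZMod 2) (PauliT ι)) : ℕ∞ :=
  sInf ((fun v => (wt v : ℕ∞)) '' {v | inDual G v ∧ v ∉ G})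

/-- `g` is an `𝔽₂`-basis (indexed family) of `G`. -/
def IsBasisFam {r : ℕ} (G : Submodule (ZMod 2) (PauliT ι)) (g : Fin r → PauliT ι) : Prop :=
  LinearIndependent (ZMod 2) g ∧ Submodule.span (ZMod 2) (Set.range g) = G

/-- The weight of a stabilizer group: optimal maximum generator weight over bases. -/
def Wgt (G : Submodule (ZMod 2) (PauliT ι)) : ℕ∞ :=
  ⨅ (r : ℕ) (g : Fin r → PauliT ι) (_ : IsBasisFam G g),
    Finset.univ.sup fun i => (wt (g i) : ℕ∞)

/-- Optimal weight over all `[[n,k,d]]` stabilizer codes. -/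
def Wopt (n k : ℕ) (d : ℕ∞) : ℕ∞ :=
  ⨅ (G : Submodule (ZMod 2) (Pauli n))
    (_ : IsStabilizer G ∧ Module.finrank (ZMod 2) ↥G = n - k ∧ distG G = d),
    Wgt G

/-- Weight enumerator: number of elements of `G` of weight `j`. -/
def Aj (G : Submodule (ZMod 2) (PauliT ι)) (j : ℕ) : ℕ :=
  Nat.card {g : PauliT ι // g ∈ G ∧ wt g = j}

/-- A weight-optimal generating set. -/
def IsWeightOptimalBasis {r : ℕ} (G : Submodule (ZMod 2) (PauliT ι))
    (g : Fin r → PauliT ι) : Prop :=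
  IsBasisFam G g ∧ Monotone (fun i => wt (g i)) ∧
    ∀ h : Fin r → PauliT ι, IsBasisFam G h → Monotone (fun i => wt (h i)) →
      ∀ i, wt (g i) ≤ wt (h i)

/-- Set of average generator weights over all bases of `G`. -/
def WavgSet (G : Submodule (ZMod 2) (PauliT ι)) : Set ℚ :=
  {x | ∃ (r : ℕ) (g : Fin r → PauliT ι), IsBasisFam G g ∧
        x = (∑ i, (wt (g i) : ℚ)) / (r : ℚ)}

/-- Splitting of Pauli strings along a bipartition given by a predicate. -/
def splitEquiv (p : ι → Prop) :
    PauliT ι ≃ₗ[ZMod 2] PauliT {x // p x} × PauliT {x // ¬ p x} :=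
  (LinearEquiv.funCongrLeft (ZMod 2) (ZMod 2 × ZMod 2) (Equiv.sumCompl p)).trans
    (LinearEquiv.sumArrowLequivProdArrow _ _ _ _)

/-- Tensor product of subspaces along a bipartition. -/
def tensorAlong (p : ι → Prop)
    (GA : Submodule (ZMod 2) (PauliT {x // p x}))
    (GB : Submodule (ZMod 2) (PauliT {x // ¬ p x})) :
    Submodule (ZMod 2) (PauliT ι) :=
  (GA.prod GB).comap (splitEquiv p).toLinearMap

/-- Decomposability as a tensor product over a nontrivial bipartition. -/
def Decomposable (G : Submodule (ZMod 2) (PauliT ι)) : Prop :=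
  ∃ p : ι → Prop, (∃ x, p x) ∧ (∃ x, ¬ p x) ∧
    ∃ (GA : Submodule (ZMod 2) (PauliT {x // p x}))
      (GB : Submodule (ZMod 2) (PauliT {x // ¬ p x})),
      G = tensorAlong p GA GB

/-- Identification of `Pauli (n₁+n₂)` with `Pauli n₁ × Pauli n₂`. -/
def pauliSumEquiv (n₁ n₂ : ℕ) :
    Pauli (n₁ + n₂) ≃ₗ[ZMod 2] Pauli n₁ × Pauli n₂ :=
  (LinearEquiv.funCongrLeft (ZMod 2) (ZMod 2 × ZMod 2) finSumFinEquiv).trans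
    (LinearEquiv.sumArrowLequivProdArrow _ _ _ _)

/-- Tensor product of stabilizer subspaces on `n₁` and `n₂` qubits. -/
def tensorFin {n₁ n₂ : ℕ} (G₁ : Submodule (ZMod 2) (Pauli n₁))
    (G₂ : Submodule (ZMod 2) (Pauli n₂)) :
    Submodule (ZMod 2) (Pauli (n₁ + n₂)) :=
  (G₁.prod G₂).comap (pauliSumEquiv n₁ n₂).toLinearMap


lemma wt_zero_aux : wt (0 : PauliT ι) = 0 := by simp [wt]

lemma wt_add_le_aux (u v : PauliT ι) : wt (u + v) ≤ wt u + wt v := by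
  unfold wt
  refine le_trans (Finset.card_le_card ?_) (Finset.card_union_le _ _)
  intro i hi
  simp only [Finset.mem_filter, Finset.mem_univ, true_and, Finset.mem_union, Pi.add_apply] at hi ⊢
  by_contra hc
  push Not at hc
  exact hi (by rw [hc.1, hc.2, add_zero])

lemma wt_sum_le_aux {κ : Type} (s : Finset κ) (f : κ → PauliT ι) :
    wt (∑ i ∈ s, f i) ≤ ∑ i ∈ s, wt (f i) := by
  induction s using Finset.induction_on with
  | empty => simp [wt_zero_aux]
  | insert a s ha ih =>
    rw [Finset.sum_insert ha, Finset.sum_insert ha]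
    exact (wt_add_le_aux _ _).trans (by omega)

lemma sum_Aj_aux (G : Submodule (ZMod 2) (PauliT ι)) (N : ℕ) :
    ∑ i ∈ Finset.range N, Aj G i =
      (Finset.univ.filter fun v : PauliT ι => v ∈ G ∧ wt v < N).card := by
  rw [Finset.card_eq_sum_card_fiberwise (f := wt) (t := Finset.range N)]
  · refine Finset.sum_congr rfl fun i hi => ?_
    rw [Finset.mem_range] at hi
    unfold Aj
    rw [Nat.card_eq_fintype_card, Fintype.card_subtype]
    congr 1
    ext v
    simp only [Finset.mem_filter, Finset.mem_univ, true_and]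
    constructor
    · rintro ⟨a, b⟩
      exact ⟨⟨a, by omega⟩, b⟩
    · rintro ⟨⟨a, _⟩, b⟩
      exact ⟨a, b⟩
  · intro v hv
    simp at hv ⊢
    exact hv.2

lemma subset_sum_inj_aux {r : ℕ} (g : Fin r → PauliT ι) (hg : LinearIndependent (ZMod 2) g)
    (U V : Finset (Fin r)) (h : ∑ i ∈ U, g i = ∑ i ∈ V, g i) : U = V := by
  have key : ∀ U : Finset (Fin r), ∑ i ∈ U, g i =
      Fintype.linearCombination (ZMod 2) g (fun i => if i ∈ U then 1 else 0) := by
    intro U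
    simp [Fintype.linearCombination_apply, ite_smul]
  rw [key, key] at h
  have h2 := hg.fintypeLinearCombination_injective h
  ext i
  have := congrFun h2 i
  by_cases h1 : i ∈ U <;> by_cases h3 : i ∈ V <;> simp_all

lemma low_card_aux {r : ℕ} (w : ℕ) (G : Submodule (ZMod 2) (PauliT ι))
    (hdim : Module.finrank (ZMod 2) ↥G = r)
    (g : Fin r → PauliT ι) (hopt : IsWeightOptimalBasis G g) :
    (Finset.univ.filter fun v : PauliT ι => v ∈ G ∧ wt v < w).card ≤
      2 ^ (Finset.univ.filter fun i => wt (g i) < w).card := by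
  set s : Set (PauliT ι) := {v | v ∈ G ∧ wt v < w} with hs
  obtain ⟨b, hbs, hspan, hli⟩ := exists_linearIndependent (ZMod 2) s
  have hli' : LinearIndepOn (ZMod 2) id b := hli
  have hbG : b ⊆ (G : Set (PauliT ι)) := fun v hv => (hbs hv).1
  obtain ⟨c, hcG, hbc, hGc, hcli⟩ := exists_linearIndepOn_extension hli' hbG
  simp only [Set.image_id] at hGc
  have hcspan : Submodule.span (ZMod 2) c = G :=
    le_antisymm (Submodule.span_le.2 hcG) hGc
  have hcc : Fintype.card c = r := by
    rw [← hdim, ← hcspan, finrank_span_set_eq_card hcli, Set.toFinset_card]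
  have hbcard : (Finset.univ.filter fun v : PauliT ι => v ∈ G ∧ wt v < w).card
      ≤ 2 ^ b.toFinset.card := by
    rw [← finrank_span_set_eq_card hli']
    have h1 := Module.card_eq_pow_finrank (K := ZMod 2) (V := Submodule.span (ZMod 2) b)
    rw [ZMod.card] at h1
    rw [← h1, Fintype.card_subtype]
    apply Finset.card_le_card
    intro v hv
    simp only [Finset.mem_filter, Finset.mem_univ, true_and] at hv ⊢
    rw [hspan]
    exact Submodule.subset_span hv
  refine hbcard.trans (Nat.pow_le_pow_right (by norm_num) ?_)
  let e : Fin r ≃ c := (Fintype.equivFinOfCardEq hcc).symm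
  let σ := Tuple.sort (fun i => wt (e i : PauliT ι))
  let h : Fin r → PauliT ι := fun i => (e (σ i) : PauliT ι)
  have hmono : Monotone (fun i => wt (h i)) :=
    Tuple.monotone_sort (fun i => wt (e i : PauliT ι))
  have hbasis : IsBasisFam G h := by
    constructor
    · exact LinearIndependent.comp hcli (fun i => e (σ i)) (e.injective.comp σ.injective)
    · rw [← hcspan]
      congr 1
      ext v
      constructor
      · rintro ⟨i, rfl⟩
        exact (e (σ i)).2
      · intro hv
        exact ⟨σ.symm (e.symm ⟨v, hv⟩), by simp [h]⟩
  have hle := hopt.2.2 h hbasis hmono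
  calc b.toFinset.card
      ≤ ((Finset.univ.filter fun i => wt (g i) < w).image h).card := by
        apply Finset.card_le_card
        intro v hv
        rw [Set.mem_toFinset] at hv
        rw [Finset.mem_image]
        have hh : h (σ.symm (e.symm ⟨v, hbc hv⟩)) = v := by simp [h]
        refine ⟨σ.symm (e.symm ⟨v, hbc hv⟩), ?_, hh⟩
        simp only [Finset.mem_filter, Finset.mem_univ, true_and]
        refine (hle _).trans_lt ?_
        rw [hh]
        exact (hbs hv).2
    _ ≤ _ := Finset.card_image_le

lemma growth_aux {r : ℕ} (w M : ℕ) (G : Submodule (ZMod 2) (PauliT ι))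
    (g : Fin r → PauliT ι) (hg : LinearIndependent (ZMod 2) g) (hmem : ∀ i, g i ∈ G)
    (L H : Finset (Fin r)) (hLH : Disjoint L H)
    (hL : ∀ i ∈ L, wt (g i) ≤ w - 1) (hH : ∀ i ∈ H, wt (g i) ≤ w) :
    (∑ p ∈ Finset.range (L.card + 1), ∑ q ∈ Finset.range (H.card + 1),
          if p * (w - 1) + q * w ≤ M then L.card.choose p * H.card.choose q else 0)
        ≤ ∑ m ∈ Finset.range (M + 1), Aj G m := by
  rw [sum_Aj_aux]
  have h1 : (∑ p ∈ Finset.range (L.card + 1), ∑ q ∈ Finset.range (H.card + 1),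
          if p * (w - 1) + q * w ≤ M then L.card.choose p * H.card.choose q else 0)
      = ((L.powerset ×ˢ H.powerset).filter
          fun x => x.1.card * (w - 1) + x.2.card * w ≤ M).card := by
    rw [Finset.card_filter, Finset.sum_product]
    have h2 : ∀ S : Finset (Fin r), (∑ T ∈ H.powerset,
        if S.card * (w - 1) + T.card * w ≤ M then 1 else 0) =
        ∑ q ∈ Finset.range (H.card + 1), H.card.choose q •
          (if S.card * (w - 1) + q * w ≤ M then 1 else 0) := fun S =>
      Finset.sum_powerset_apply_card
        (fun q => if S.card * (w - 1) + q * w ≤ M then 1 else 0)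
    simp only [h2]
    rw [Finset.sum_powerset_apply_card (fun p => ∑ q ∈ Finset.range (H.card + 1),
      H.card.choose q • (if p * (w - 1) + q * w ≤ M then 1 else 0))]
    refine Finset.sum_congr rfl fun p _ => ?_
    rw [Finset.smul_sum]
    refine Finset.sum_congr rfl fun q _ => ?_
    split_ifs <;> simp
  rw [h1]
  refine Finset.card_le_card_of_injOn (fun x => ∑ i ∈ x.1 ∪ x.2, g i) ?_ ?_
  · rintro ⟨S, T⟩ hx
    simp only [Finset.coe_filter, Finset.mem_product, Finset.mem_powerset, Set.mem_setOf_eq,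
      Finset.mem_univ, true_and] at hx ⊢
    obtain ⟨⟨hS, hT⟩, hM⟩ := hx
    refine ⟨Submodule.sum_mem _ fun i _ => hmem i, ?_⟩
    refine Nat.lt_succ_of_le ((wt_sum_le_aux _ _).trans (le_trans ?_ hM))
    rw [Finset.sum_union (Finset.disjoint_of_subset_left hS
      (Finset.disjoint_of_subset_right hT hLH))]
    refine Nat.add_le_add ?_ ?_
    · exact Finset.sum_le_card_nsmul _ _ _ fun i hi => hL i (hS hi)
    · exact Finset.sum_le_card_nsmul _ _ _ fun i hi => hH i (hT hi)
  · rintro ⟨S, T⟩ hx ⟨S', T'⟩ hx' heq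
    simp only [Finset.coe_filter, Finset.mem_product, Finset.mem_powerset,
      Set.mem_setOf_eq] at hx hx'
    have hU := subset_sum_inj_aux g hg _ _ heq
    have hd : ∀ i, i ∈ L → i ∉ H := fun i a b => Finset.disjoint_left.1 hLH a b
    have hmemU : ∀ i, (i ∈ S ∨ i ∈ T) ↔ (i ∈ S' ∨ i ∈ T') := fun i => by
      simpa using Finset.ext_iff.1 hU i
    have a1 := @hx.1.1
    have a2 := @hx.1.2
    have a3 := @hx'.1.1
    have a4 := @hx'.1.2
    ext i
    · have := hmemU i; have := @a1 i; have := @a2 i; have := @a3 i; have := @a4 i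
      have := hd i
      tauto
    · have := hmemU i; have := @a1 i; have := @a2 i; have := @a3 i; have := @a4 i
      have := hd i
      tauto

/-- constraints on the weight enumerators induced by a weight-optimal
generating set: with `w` the maximal generator weight and `y` the number of generators
of weight `w`, one has `1 ≤ y ≤ n-k`, `A_w ≥ y`, `Σ_{i<w} A_i ≤ 2^{n-k-y}`, and the
cumulative growth law for all `w - 1 ≤ M ≤ n`. -/
theorem weight_enumerator_constraints (n k w y : ℕ) (hpos : 0 < n - k)
    (G : Submodule (ZMod 2) (Pauli n)) (hG : IsStabilizer G)
    (hdim : Module.finrank (ZMod 2) ↥G = n - k)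
    (g : Fin (n - k) → Pauli n) (hopt : IsWeightOptimalBasis G g)
    (hw : w = Finset.univ.sup fun i => wt (g i))
    (hy : y = (Finset.univ.filter fun i => wt (g i) = w).card) :
    1 ≤ y ∧ y ≤ n - k ∧
    y ≤ Aj G w ∧
    (∑ i ∈ Finset.range w, Aj G i) ≤ 2 ^ (n - k - y) ∧
    (∀ M : ℕ, w - 1 ≤ M → M ≤ n →
      (∑ p ∈ Finset.range (n - k - y + 1), ∑ q ∈ Finset.range (y + 1),
          if p * (w - 1) + q * w ≤ M then (n - k - y).choose p * y.choose q else 0)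
        ≤ ∑ m ∈ Finset.range (M + 1), Aj G m) := by
  obtain ⟨hbas, hmono, -⟩ := id hopt
  have hmem : ∀ i, g i ∈ G := fun i => by
    rw [← hbas.2]
    exact Submodule.subset_span ⟨i, rfl⟩
  have hle : ∀ i, wt (g i) ≤ w := fun i => by
    rw [hw]
    exact Finset.le_sup (f := fun i => wt (g i)) (Finset.mem_univ i)
  have hLcard : (Finset.univ.filter fun i => wt (g i) < w).card = n - k - y := by
    have h1 := Finset.card_filter_add_card_filter_not (s := (Finset.univ : Finset (Fin (n - k))))
      (fun i => wt (g i) = w)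
    rw [Finset.card_univ, Fintype.card_fin, ← hy] at h1
    have h2 : (Finset.univ.filter fun i => wt (g i) < w)
        = Finset.univ.filter fun i => ¬ wt (g i) = w := by
      ext i
      have := hle i
      simp only [Finset.mem_filter, Finset.mem_univ, true_and]
      omega
    rw [h2]
    omega
  refine ⟨?_, ?_, ?_, ?_, ?_⟩
  · haveI : Nonempty (Fin (n - k)) := ⟨⟨0, hpos⟩⟩
    obtain ⟨i, -, hi⟩ := Finset.exists_mem_eq_sup (Finset.univ : Finset (Fin (n - k)))
      Finset.univ_nonempty (fun i => wt (g i))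
    rw [hy]
    exact Finset.card_pos.2 ⟨i, by simp [hw, hi]⟩
  · rw [hy]
    exact (Finset.card_filter_le _ _).trans (by simp)
  · rw [hy]
    unfold Aj
    rw [Nat.card_eq_fintype_card, Fintype.card_subtype]
    refine Finset.card_le_card_of_injOn g ?_ hbas.1.injective.injOn
    intro i hi
    simp only [Finset.coe_filter, Finset.mem_univ, true_and, Set.mem_setOf_eq] at hi ⊢
    exact ⟨hmem i, hi⟩
  · rw [sum_Aj_aux, ← hLcard]
    exact low_card_aux w G hdim g hopt
  · intro M _ _
    have := growth_aux w M G g hbas.1 hmem (Finset.univ.filter fun i => wt (g i) < w)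
      (Finset.univ.filter fun i => wt (g i) = w)
      (Finset.disjoint_filter.2 fun i _ h => by omega)
      (fun i hi => by
        have := (Finset.mem_filter.1 hi).2
        omega)
      (fun i _ => hle i)
    rw [hLcard, ← hy] at this
    exact this

end
end

section
/- Let G ⊆ P_n be an indecomposable stabilizer group of dimension n − k ≥ 1 with W(G) ≤ w, where w ≥ 2. Then the number of elements g ∈ G with 1 ≤ wt(g) ≤ min(2w − 2, n) is at least 2(n − k) − 1; equivalently, Σ_{i=1}^{min(2w−2, n)} A_i(G) ≥ (n − k) + (n − k − 1). -/
open scoped Classical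

noncomputable section

variable {ι : Type} [Fintype ι]

theorem oc_wt_le {n : ℕ} (v : Pauli n) : wt v ≤ n := by
  unfold wt
  exact (Finset.card_le_univ _).trans (by simp)

theorem oc_wt_pos {n : ℕ} (v : Pauli n) (hv : v ≠ 0) : 1 ≤ wt v := by
  unfold wt
  obtain ⟨i, hi⟩ := Function.ne_iff.mp hv
  exact Finset.card_pos.mpr ⟨i, by simpa using hi⟩

theorem oc_pair : ∀ a b : ZMod 2 × ZMod 2, a ≠ 0 → b ≠ 0 →
    a.1 * b.2 + a.2 * b.1 = 0 → a + b = 0 := by decide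

theorem oc_overlap {n : ℕ} (u v : Pauli n) (h : sympl u v = 0)
    (hx : ∃ x, u x ≠ 0 ∧ v x ≠ 0) : wt (u + v) + 2 ≤ wt u + wt v := by
  obtain ⟨x, hux, hvx⟩ := hx
  set A := Finset.univ.filter fun i => u i ≠ 0 with hA
  set B := Finset.univ.filter fun i => v i ≠ 0 with hB
  set C := Finset.univ.filter fun i => (u + v) i ≠ 0 with hC
  change C.card + 2 ≤ A.card + B.card
  have hsub : C ⊆ A ∪ B := by
    intro i hi
    simp only [hA, hB, hC, Finset.mem_union, Finset.mem_filter, Finset.mem_univ, true_and,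
      Pi.add_apply] at hi ⊢
    by_contra hcon
    push Not at hcon
    exact hi (by rw [hcon.1, hcon.2, add_zero])
  have hui := Finset.card_union_add_card_inter A B
  have hxI : x ∈ A ∩ B := by simp [hA, hB, hux, hvx]
  by_cases h2 : 2 ≤ (A ∩ B).card
  · have := Finset.card_le_card hsub
    omega
  · have h1 : (A ∩ B).card = 1 := by
      have := Finset.card_pos.mpr ⟨x, hxI⟩
      omega
    have huniq : ∀ y, y ≠ x → u y = 0 ∨ v y = 0 := by
      intro y hy
      by_contra hcon
      push Not at hcon
      have hyI : y ∈ A ∩ B := by simp [hA, hB, hcon.1, hcon.2]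
      exact hy (Finset.card_le_one.mp h1.le y hyI x hxI)
    have hz : (u x).1 * (v x).2 + (u x).2 * (v x).1 = 0 := by
      rw [← h]
      unfold sympl
      symm
      apply Finset.sum_eq_single x
      · intro y _ hy
        rcases huniq y hy with h0 | h0 <;> simp [h0]
      · simp
    have hsum := oc_pair _ _ hux hvx hz
    have hsub' : C ⊆ (A ∪ B).erase x := by
      intro i hi
      refine Finset.mem_erase.mpr ⟨?_, hsub hi⟩
      rintro rfl
      exact (Finset.mem_filter.mp hi).2 hsum
    have hc := Finset.card_le_card hsub'
    have hxU : x ∈ A ∪ B := by simp [hA, hux]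
    rw [Finset.card_erase_of_mem hxU] at hc
    have := Finset.card_pos.mpr ⟨x, hxU⟩
    omega

theorem oc_exists_basis {n : ℕ} (G : Submodule (ZMod 2) (Pauli n)) (w : ℕ)
    (hWgt : Wgt G ≤ (w : ℕ∞)) :
    ∃ (r : ℕ) (g : Fin r → Pauli n), IsBasisFam G g ∧ ∀ i, wt (g i) ≤ w := by
  by_contra hcon
  push Not at hcon
  have : ((w + 1 : ℕ) : ℕ∞) ≤ Wgt G := by
    unfold Wgt
    refine le_iInf fun r => le_iInf fun g => le_iInf fun hg => ?_
    obtain ⟨i, hi⟩ := hcon r g hg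
    refine le_trans ?_ (Finset.le_sup (f := fun i => (wt (g i) : ℕ∞)) (Finset.mem_univ i))
    exact_mod_cast hi
  have h2 := this.trans hWgt
  have h3 : w + 1 ≤ w := by exact_mod_cast h2
  omega

def ocRestr {n : ℕ} (p : Fin n → Prop) : Pauli n →ₗ[ZMod 2] Pauli n where
  toFun v := fun x => if p x then v x else 0
  map_add' u v := by ext x <;> by_cases h : p x <;> simp [h]
  map_smul' c v := by ext x <;> by_cases h : p x <;> simp [h]

theorem oc_decomp {n : ℕ} (G : Submodule (ZMod 2) (Pauli n)) (p : Fin n → Prop)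
    (h1 : ∃ x, p x) (h2 : ∃ x, ¬ p x) (hR : ∀ v ∈ G, ocRestr p v ∈ G) : Decomposable G := by
  refine ⟨p, h1, h2, (G.map (splitEquiv p).toLinearMap).map (LinearMap.fst _ _ _),
    (G.map (splitEquiv p).toLinearMap).map (LinearMap.snd _ _ _), ?_⟩
  apply le_antisymm
  · intro v hv
    refine Submodule.mem_comap.mpr (Submodule.mem_prod.mpr ⟨?_, ?_⟩)
    · exact ⟨_, ⟨v, hv, rfl⟩, rfl⟩
    · exact ⟨_, ⟨v, hv, rfl⟩, rfl⟩
  · intro v hv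
    obtain ⟨⟨_, ⟨a, ha, rfl⟩, ha'⟩, ⟨_, ⟨b, hb, rfl⟩, hb'⟩⟩ :=
      Submodule.mem_prod.mp (Submodule.mem_comap.mp hv)
    have hav : ∀ x, p x → a x = v x := fun x hx => congrFun ha' ⟨x, hx⟩
    have hbv : ∀ x, ¬ p x → b x = v x := fun x hx => congrFun hb' ⟨x, hx⟩
    have : v = ocRestr p a + (b - ocRestr p b) := by
      funext x
      by_cases hx : p x
      · simp [ocRestr, hx, hav x hx]
      · simp [ocRestr, hx, hbv x hx]
    rw [this]
    exact G.add_mem (hR a ha) (G.sub_mem hb (hR b hb))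

def ocGraph {n r : ℕ} (g : Fin r → Pauli n) : SimpleGraph (Fin r) where
  Adj i j := i ≠ j ∧ ∃ x, g i x ≠ 0 ∧ g j x ≠ 0
  symm := ⟨fun _ _ h => ⟨h.1.symm, h.2.imp fun _ hx => ⟨hx.2, hx.1⟩⟩⟩
  loopless := ⟨fun _ h => h.1 rfl⟩

theorem oc_connected {n r : ℕ} (hr : 1 ≤ r) (G : Submodule (ZMod 2) (Pauli n))
    (g : Fin r → Pauli n) (hg : IsBasisFam G g) (hindec : ¬ Decomposable G) :
    (ocGraph g).Connected := by
  have : Nonempty (Fin r) := ⟨⟨0, hr⟩⟩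
  refine SimpleGraph.Connected.mk ?_
  intro i j
  by_contra hij
  apply hindec
  have hsep : ∀ l, ¬ (ocGraph g).Reachable i l → ∀ x,
      (∃ m, (ocGraph g).Reachable i m ∧ g m x ≠ 0) → g l x = 0 := by
    rintro l hl x ⟨m, hm, hmx⟩
    by_contra hlx
    apply hl
    refine hm.trans (SimpleGraph.Adj.reachable ?_)
    refine ⟨?_, x, hmx, hlx⟩
    rintro rfl
    exact hl hm
  refine oc_decomp G (fun x => ∃ m, (ocGraph g).Reachable i m ∧ g m x ≠ 0) ?_ ?_ ?_
  · obtain ⟨x, hx⟩ := Function.ne_iff.mp (hg.1.ne_zero i)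
    exact ⟨x, i, SimpleGraph.Reachable.refl _, hx⟩
  · obtain ⟨x, hx⟩ := Function.ne_iff.mp (hg.1.ne_zero j)
    exact ⟨x, fun hp => hx (hsep j hij x hp)⟩
  · have hle : G ≤ G.comap (ocRestr fun x => ∃ m, (ocGraph g).Reachable i m ∧ g m x ≠ 0) := by
      conv_lhs => rw [← hg.2]
      rw [Submodule.span_le]
      rintro _ ⟨l, rfl⟩
      have hlG : g l ∈ G := by
        rw [← hg.2]; exact Submodule.subset_span ⟨l, rfl⟩
      change ocRestr _ (g l) ∈ G
      by_cases hl : (ocGraph g).Reachable i l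
      · convert hlG using 1
        funext x
        by_cases hx : g l x = 0
        · simp [ocRestr, hx]
        · exact if_pos ⟨l, hl, hx⟩
      · convert G.zero_mem using 1
        funext x
        by_cases hx : ∃ m, (ocGraph g).Reachable i m ∧ g m x ≠ 0
        · exact (if_pos hx).trans (hsep l hl x hx)
        · exact if_neg hx
    exact fun v hv => hle hv

theorem oc_sum_inj {n r : ℕ} (g : Fin r → Pauli n) (hg : LinearIndependent (ZMod 2) g) :
    Function.Injective (fun s : Finset (Fin r) => ∑ i ∈ s, g i) := by
  intro s t hst
  have key : ∀ s : Finset (Fin r), ∑ i ∈ s, g i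
      = ∑ i, (if i ∈ s then (1 : ZMod 2) else 0) • g i := by
    intro s
    simp [ite_smul, Finset.sum_ite_mem]
  simp only [key] at hst
  have h := Fintype.linearIndependent_iff.mp hg
    (fun i => (if i ∈ s then (1 : ZMod 2) else 0) - (if i ∈ t then (1 : ZMod 2) else 0))
    (by simp only [sub_smul, Finset.sum_sub_distrib]; exact sub_eq_zero.mpr hst)
  ext i
  have := h i
  by_cases h1 : i ∈ s <;> by_cases h2 : i ∈ t <;> simp_all

theorem oc_count {n : ℕ} (G : Submodule (ZMod 2) (Pauli n)) (m : ℕ) :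
    ∑ i ∈ Finset.Icc 1 m, Aj G i
      = (Finset.univ.filter fun v : Pauli n => v ∈ G ∧ wt v ∈ Finset.Icc 1 m).card := by
  rw [Finset.card_eq_sum_card_fiberwise (f := wt) (t := Finset.Icc 1 m)]
  · refine Finset.sum_congr rfl fun i hi => ?_
    unfold Aj
    rw [Nat.card_eq_fintype_card, Fintype.card_subtype]
    congr 1
    ext v
    simp only [Finset.mem_filter, Finset.mem_univ, true_and]
    constructor
    · rintro ⟨h, rfl⟩; exact ⟨⟨h, hi⟩, rfl⟩
    · rintro ⟨⟨h, _⟩, h'⟩; exact ⟨h, h'⟩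
  · intro v hv
    exact (Finset.mem_filter.mp hv).2.2

/-- overlap constraint: an indecomposable stabilizer group of dimension
`n - k ≥ 1` with `W(G) ≤ w`, `w ≥ 2`, has at least `(n-k) + (n-k-1)` elements of weight
between `1` and `min(2w-2, n)`. -/
theorem overlap_constraint (n k w : ℕ) (hw : 2 ≤ w) (hr : 1 ≤ n - k)
    (G : Submodule (ZMod 2) (Pauli n)) (hG : IsStabilizer G)
    (hdim : Module.finrank (ZMod 2) ↥G = n - k)
    (hindec : ¬ Decomposable G) (hWgt : Wgt G ≤ (w : ℕ∞)) :
    (n - k) + (n - k - 1) ≤ ∑ i ∈ Finset.Icc 1 (min (2 * w - 2) n), Aj G i := by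
  obtain ⟨r, g, hg, hwt⟩ := oc_exists_basis G w hWgt
  have hrk : n - k = r := by
    rw [← hdim, ← hg.2, finrank_span_eq_card hg.1, Fintype.card_fin]
  rw [hrk] at hr ⊢
  rw [oc_count]
  have hconn := oc_connected hr G g hg hindec
  have hedge := hconn.card_vert_le_card_edgeSet_add_one
  rw [Nat.card_eq_fintype_card, Fintype.card_fin, Nat.card_eq_fintype_card,
    ← SimpleGraph.edgeFinset_card] at hedge
  have hgG : ∀ i, g i ∈ G := fun i => by
    rw [← hg.2]; exact Submodule.subset_span ⟨i, rfl⟩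
  set T1 : Finset (Finset (Fin r)) := Finset.univ.image fun i => {i} with hT1
  set T2 : Finset (Finset (Fin r)) := (ocGraph g).edgeFinset.image Sym2.toFinset with hT2
  have hc1 : T1.card = r := by
    rw [hT1, Finset.card_image_of_injective _ Finset.singleton_injective]; simp
  have hc2 : T2.card = (ocGraph g).edgeFinset.card := by
    rw [hT2, Finset.card_image_of_injective]
    intro a b hab
    refine Sym2.ext fun x => ?_
    rw [← Sym2.mem_toFinset, hab, Sym2.mem_toFinset]
  have hmem2 : ∀ s ∈ T2, ∃ i j, (ocGraph g).Adj i j ∧ s = {i, j} := by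
    intro s hs
    obtain ⟨e, he, rfl⟩ := Finset.mem_image.mp hs
    induction e with
    | _ i j =>
      refine ⟨i, j, by simpa using he, ?_⟩
      ext x
      simp
  have hdisj : Disjoint T1 T2 := by
    rw [Finset.disjoint_left]
    intro s hs1 hs2
    obtain ⟨i, _, rfl⟩ := Finset.mem_image.mp hs1
    obtain ⟨a, b, hab, h⟩ := hmem2 _ hs2
    have := congrArg Finset.card h
    rw [Finset.card_pair hab.1] at this
    simp at this
  have hinj := oc_sum_inj g hg.1
  have hsub : (T1 ∪ T2).image (fun s => ∑ i ∈ s, g i) ⊆ Finset.univ.filter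
      fun v : Pauli n => v ∈ G ∧ wt v ∈ Finset.Icc 1 (min (2 * w - 2) n) := by
    intro v hv
    obtain ⟨s, hs, rfl⟩ := Finset.mem_image.mp hv
    simp only [Finset.mem_filter, Finset.mem_univ, true_and, Finset.mem_Icc, le_min_iff]
    refine ⟨G.sum_mem fun i _ => hgG i, oc_wt_pos _ ?_, ?_, oc_wt_le _⟩
    · intro h0
      have hse : s = ∅ := hinj (by simpa using h0)
      rcases Finset.mem_union.mp hs with h | h
      · obtain ⟨i, _, hi⟩ := Finset.mem_image.mp h
        rw [hse] at hi
        exact Finset.singleton_ne_empty _ hi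
      · obtain ⟨a, b, _, hi⟩ := hmem2 _ h
        rw [hse] at hi
        exact Finset.insert_ne_empty _ _ hi.symm
    · rcases Finset.mem_union.mp hs with h | h
      · obtain ⟨i, _, rfl⟩ := Finset.mem_image.mp h
        have := hwt i
        simp only [Finset.sum_singleton]
        omega
      · obtain ⟨a, b, hab, rfl⟩ := hmem2 _ h
        rw [Finset.sum_pair hab.1]
        have h1 := oc_overlap _ _ (hG _ (hgG a) _ (hgG b)) hab.2
        have := hwt a
        have := hwt b
        omega
  have hle := Finset.card_le_card hsub
  rw [Finset.card_image_of_injective _ hinj, Finset.card_union_of_disjoint hdisj, hc1, hc2] at hle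
  omega

end
end

section
/- Correctness of the reduction from maximum-likelihood decoding to the shortest-basis problem over 𝔽₂: let H : 𝔽₂^n →ₗ 𝔽₂^{m'} be an 𝔽₂-linear map, s ∈ 𝔽₂^{m'}, t ∈ ℕ, and suppose x ∈ 𝔽₂^n satisfies H x = s. Let 𝟙 := (1, …, 1) ∈ 𝔽₂^n and define the 𝔽₂-subspace V := {(u + c • x, c • 𝟙) : u ∈ ker H, c ∈ 𝔽₂} ⊆ 𝔽₂^n × 𝔽₂^n, where the weight of a pair (a, b) is the total Hamming weight wt(a) + wt(b). Then there exists e ∈ 𝔽₂^n with H e = s and wt(e) ≤ t if and only if V admits an 𝔽₂-basis all of whose elements have weight ≤ n + t. -/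
open scoped Classical

noncomputable section

variable {ι : Type} [Fintype ι]

/-- Hamming weight of an `𝔽₂` vector. -/
def hwt {m : ℕ} (v : Fin m → ZMod 2) : ℕ := (Finset.univ.filter fun i => v i ≠ 0).card

/-- correctness of the reduction `MLD ≤p SBP` over `𝔽₂`. -/
theorem mld_to_sbp_reduction (n m' : ℕ)
    (H : (Fin n → ZMod 2) →ₗ[ZMod 2] (Fin m' → ZMod 2))
    (s : Fin m' → ZMod 2) (t : ℕ) (x : Fin n → ZMod 2) (hx : H x = s)
    (V : Submodule (ZMod 2) ((Fin n → ZMod 2) × (Fin n → ZMod 2)))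
    (hV : ∀ v, v ∈ V ↔ ∃ (u : Fin n → ZMod 2) (c : ZMod 2),
        u ∈ LinearMap.ker H ∧ v = (u + c • x, c • fun _ => (1 : ZMod 2))) :
    (∃ e : Fin n → ZMod 2, H e = s ∧ hwt e ≤ t) ↔
    (∃ (r : ℕ) (b : Fin r → (Fin n → ZMod 2) × (Fin n → ZMod 2)),
        LinearIndependent (ZMod 2) b ∧
        Submodule.span (ZMod 2) (Set.range b) = V ∧
        ∀ i, hwt (b i).1 + hwt (b i).2 ≤ n + t) := by
  have hle : ∀ v : Fin n → ZMod 2, hwt v ≤ n := fun v => by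
    have := Finset.card_filter_le (Finset.univ : Finset (Fin n)) (fun i => v i ≠ 0)
    simpa [hwt] using this
  have hone : hwt (fun _ : Fin n => (1 : ZMod 2)) = n := by simp [hwt]
  have hzero : hwt (0 : Fin n → ZMod 2) = 0 := by simp [hwt]
  have h01 : ∀ c : ZMod 2, c = 0 ∨ c = 1 := by decide
  constructor
  · rintro ⟨e, he, hwe⟩
    let S : Set ((Fin n → ZMod 2) × (Fin n → ZMod 2)) :=
      {v | v ∈ V ∧ hwt v.1 + hwt v.2 ≤ n + t}
    have hu : ∀ u ∈ LinearMap.ker H, ((u, 0) : (Fin n → ZMod 2) × (Fin n → ZMod 2)) ∈ S := by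
      intro u hu
      refine ⟨(hV _).2 ⟨u, 0, hu, by simp⟩, ?_⟩
      have := hle u
      simp only [hzero]
      omega
    have heS : ((e, fun _ => 1) : (Fin n → ZMod 2) × (Fin n → ZMod 2)) ∈ S := by
      refine ⟨(hV _).2 ⟨e - x, 1, by simp [he, hx], by simp⟩, ?_⟩
      simp only [hone]
      omega
    have hspan : Submodule.span (ZMod 2) S = V := by
      apply le_antisymm
      · exact Submodule.span_le.2 fun v hv => hv.1
      · intro v hv
        obtain ⟨u, c, huk, rfl⟩ := (hV v).1 hv
        rcases h01 c with rfl | rfl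
        · simpa using Submodule.subset_span (R := ZMod 2) (hu u huk)
        · have h1 := Submodule.subset_span (R := ZMod 2)
            (hu (u + x - e) (by
              have := LinearMap.mem_ker.1 huk
              simp [he, hx, this]))
          have h2 := Submodule.subset_span (R := ZMod 2) heS
          simpa using Submodule.add_mem _ h1 h2
    obtain ⟨B, hBS, hB, hli⟩ := exists_linearIndependent (ZMod 2) S
    have hfin : Finite B := inferInstance
    obtain ⟨r, ⟨f⟩⟩ := Finite.exists_equiv_fin B
    refine ⟨r, fun i => (f.symm i : (Fin n → ZMod 2) × (Fin n → ZMod 2)),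
      hli.comp f.symm f.symm.injective, ?_, fun i => (hBS (f.symm i).2).2⟩
    have hr : Set.range (fun i => (f.symm i : (Fin n → ZMod 2) × (Fin n → ZMod 2))) = B := by
      have := f.symm.surjective.range_comp
        (Subtype.val : B → (Fin n → ZMod 2) × (Fin n → ZMod 2))
      rw [Subtype.range_coe] at this
      exact this
    rw [hr, hB, hspan]
  · rintro ⟨r, b, -, hb, hw⟩
    by_cases hn : n = 0
    · exact ⟨x, hx, by have := hle x; omega⟩
    by_cases hall : ∀ i, (b i).2 = 0
    · exfalso
      have hVle : V ≤ LinearMap.ker (LinearMap.snd (ZMod 2) (Fin n → ZMod 2) (Fin n → ZMod 2)) := by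
        rw [← hb, Submodule.span_le]
        rintro _ ⟨i, rfl⟩
        exact hall i
      have h1 : ((x, fun _ => 1) : (Fin n → ZMod 2) × (Fin n → ZMod 2)) ∈ V :=
        (hV _).2 ⟨0, 1, by simp, by simp⟩
      have h2 := LinearMap.mem_ker.1 (hVle h1)
      have h3 := congrFun h2 ⟨0, Nat.pos_of_ne_zero hn⟩
      simp at h3
    · push Not at hall
      obtain ⟨i, hi⟩ := hall
      have hbi : b i ∈ V := hb ▸ Submodule.subset_span ⟨i, rfl⟩
      obtain ⟨u, c, huk, hv⟩ := (hV _).1 hbi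
      have hwi := hw i
      rw [hv] at hi hwi
      rcases h01 c with rfl | rfl
      · simp at hi
      · refine ⟨u + x, by rw [map_add, LinearMap.mem_ker.1 huk, hx, zero_add], ?_⟩
        simp only [one_smul, hone] at hwi
        omega

end
end
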